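/- arXiv:2108.02691 — 3 statements merged into one kernel-verified Lean document; each statement's English description precedes it below -/
import Mathlib

section
/- Let n ≥ 1, let p_k, q_k, r_k (k = 1,…,n) and s be positive real numbers, and let t be a real number with 0 < Σ_{k=1}^n p_k/q_k − t < s. Then the n-fold improper integral ∫_{(0,∞)^n} [∏_{k=1}^n x_k^{p_k−1}] · [Σ_{k=1}^n (r_k x_k)^{q_k}]^{−t} · [1 + Σ_{k=1}^n (r_k x_k)^{q_k}]^{−s} dx_1…dx_n equals [∏_{k=1}^n Γ(p_k/q_k)] · Γ(Σ_{k=1}^n p_k/q_k − t) · Γ(s + t − Σ_{k=1}^n p_k/q_k) / ([∏_{k=1}^n q_k r_k^{p_k}] · Γ(Σ_{k=1}^n p_k/q_k) · Γ(s)). -/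
open MeasureTheory Real

open scoped ENNReal NNReal

/-!
Write `A = ∑ k, p k / q k`. The substitution `y k = (r k * x k) ^ q k` carries
`∏ x k ^ (p k - 1) dx` to a multiple of `∏ y k ^ (p k / q k - 1) dy`, a homogeneous measure of
degree `A`. Its image under `y ↦ ∑ k, y k` is then homogeneous of degree `A` too, and the only such
s-finite measures on `(0, ∞)` are the multiples of `v ^ (A - 1) dv`. Integrating `exp (-v)` against
both identifies the multiple as `∏ Γ(p k / q k) / Γ(A)`. What remains is the integral of
`v ^ (A - t - 1) * (1 + v) ^ (-s)` over `(0, ∞)`, a beta integral.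
-/

section Pi

lemma lintegral_fin_nat_prod_eq_prod {n : ℕ} {X : Fin n → Type*} [∀ i, MeasurableSpace (X i)]
    {μ : (i : Fin n) → Measure (X i)} [∀ i, SigmaFinite (μ i)] {f : (i : Fin n) → X i → ℝ≥0∞}
    (hf : ∀ i, Measurable (f i)) :
    ∫⁻ x, ∏ i, f i (x i) ∂Measure.pi μ = ∏ i, ∫⁻ x, f i x ∂μ i := by
  induction n with
  | zero => simp
  | succ n ih =>
    have htail : Measurable fun x : (i : Fin n) → X i.succ => ∏ i, f i.succ (x i) := by fun_prop
    calc
      _ = ∫⁻ x : X 0 × ((i : Fin n) → X i.succ), f 0 x.1 * ∏ i, f i.succ (x.2 i)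
            ∂(μ 0).prod (Measure.pi fun i => μ i.succ) := by
        simp_rw [Fin.prod_univ_succ]
        exact (measurePreserving_piFinSuccAbove μ 0).lintegral_comp <|
          ((hf 0).comp measurable_fst).mul (htail.comp measurable_snd)
      _ = _ := by
        rw [lintegral_prod_mul (hf 0).aemeasurable htail.aemeasurable, ih fun i => hf i.succ,
          Fin.prod_univ_succ]

variable {ι : Type*} [Fintype ι] {X : ι → Type*} [∀ i, MeasurableSpace (X i)]
  {μ : (i : ι) → Measure (X i)}

lemma lintegral_fintype_prod_eq_prod [∀ i, SigmaFinite (μ i)] {f : (i : ι) → X i → ℝ≥0∞}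
    (hf : ∀ i, Measurable (f i)) :
    ∫⁻ x, ∏ i, f i (x i) ∂Measure.pi μ = ∏ i, ∫⁻ x, f i x ∂μ i := by
  let e := (Fintype.equivFin ι).symm
  rw [← (measurePreserving_piCongrLeft μ e).lintegral_comp_emb
    (MeasurableEquiv.measurableEmbedding _)]
  simp_rw [← e.prod_comp, MeasurableEquiv.coe_piCongrLeft, Equiv.piCongrLeft_apply_apply]
  exact lintegral_fin_nat_prod_eq_prod fun i => hf (e i)

lemma pi_withDensity_eq_withDensity_prod [∀ i, SigmaFinite (μ i)] {f : (i : ι) → X i → ℝ≥0∞}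
    [∀ i, SigmaFinite ((μ i).withDensity (f i))] (hf : ∀ i, Measurable (f i)) :
    Measure.pi (fun i => (μ i).withDensity (f i)) =
      (Measure.pi μ).withDensity fun x => ∏ i, f i (x i) := by
  refine Measure.pi_eq fun s hs => ?_
  simp_rw [withDensity_apply _ (hs _)]
  rw [withDensity_apply _ (.univ_pi hs), Measure.restrict_pi_pi, lintegral_fintype_prod_eq_prod hf]

lemma pi_nnreal_smul [∀ i, SigmaFinite (μ i)] (c : ι → ℝ≥0) :
    Measure.pi (fun i => c i • μ i) = (∏ i, c i) • Measure.pi μ := by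
  refine Measure.pi_eq fun s _ => ?_
  simp only [Measure.smul_apply, Measure.pi_pi, ENNReal.smul_def, smul_eq_mul,
    Finset.prod_mul_distrib, ENNReal.ofNNReal_finsetProd]

end Pi

/-- The measure `x ^ (a - 1) dx` on `(0, ∞)`, as a measure on `ℝ`. With this shift in the exponent
`rpowMeasure 0` is the Haar measure `dx / x` of the multiplicative group `(0, ∞)`, and
`Real.Gamma a` is the integral of `exp (-x)` against `rpowMeasure a`. -/
noncomputable def rpowMeasure (a : ℝ) : Measure ℝ :=
  (volume.restrict (Set.Ioi 0)).withDensity fun x => ENNReal.ofReal (x ^ (a - 1))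

instance (a : ℝ) : SigmaFinite (rpowMeasure a) :=
  inferInstanceAs (SigmaFinite (Measure.withDensity _ _))

lemma ae_rpowMeasure_pos (a : ℝ) : ∀ᵐ x ∂rpowMeasure a, 0 < x :=
  (withDensity_absolutelyContinuous _ _).ae_le (ae_restrict_mem measurableSet_Ioi)

lemma lintegral_rpowMeasure (a : ℝ) {f : ℝ → ℝ≥0∞} (hf : Measurable f) :
    ∫⁻ x, f x ∂rpowMeasure a = ∫⁻ x in Set.Ioi 0, ENNReal.ofReal (x ^ (a - 1)) * f x :=
  lintegral_withDensity_eq_lintegral_mul _ (by fun_prop) hf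

lemma lintegral_rpowMeasure_add (a b : ℝ) {f : ℝ → ℝ≥0∞} (hf : Measurable f) :
    ∫⁻ x, f x ∂rpowMeasure (a + b) = ∫⁻ x, ENNReal.ofReal (x ^ a) * f x ∂rpowMeasure b := by
  rw [lintegral_rpowMeasure _ hf, lintegral_rpowMeasure _ (by fun_prop)]
  refine setLIntegral_congr_fun measurableSet_Ioi fun x (hx : 0 < x) => ?_
  rw [← mul_assoc, ← ENNReal.ofReal_mul (by positivity), ← rpow_add hx, sub_add_eq_add_sub,
    add_comm b]

lemma lintegral_rpowMeasure_eq_lintegral_zero (a : ℝ) {f : ℝ → ℝ≥0∞} (hf : Measurable f) :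
    ∫⁻ x, f x ∂rpowMeasure a = ∫⁻ x, ENNReal.ofReal (x ^ a) * f x ∂rpowMeasure 0 := by
  simpa using lintegral_rpowMeasure_add a 0 hf

lemma integral_rpowMeasure {E : Type*} [NormedAddCommGroup E] [NormedSpace ℝ E] (a : ℝ)
    (f : ℝ → E) : ∫ x, f x ∂rpowMeasure a = ∫ x in Set.Ioi 0, x ^ (a - 1) • f x := by
  rw [rpowMeasure, integral_withDensity_eq_integral_toReal_smul (by fun_prop) (by simp)]
  refine setIntegral_congr_fun measurableSet_Ioi fun x (hx : 0 < x) => ?_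
  simp only [ENNReal.toReal_ofReal (rpow_pos_of_pos hx _).le]

lemma integral_rpowMeasure_add {E : Type*} [NormedAddCommGroup E] [NormedSpace ℝ E] (a b : ℝ)
    (f : ℝ → E) : ∫ x, f x ∂rpowMeasure (a + b) = ∫ x, x ^ a • f x ∂rpowMeasure b := by
  rw [integral_rpowMeasure, integral_rpowMeasure]
  refine setIntegral_congr_fun measurableSet_Ioi fun x (hx : 0 < x) => ?_
  simp only [smul_smul, ← rpow_add hx, sub_add_eq_add_sub, add_comm b]

lemma bijOn_mul_rpow_Ioi {q r : ℝ} (hq : q ≠ 0) (hr : 0 < r) :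
    Set.BijOn (fun x => (r * x) ^ q) (Set.Ioi 0) (Set.Ioi 0) := by
  refine Set.InvOn.bijOn (f' := fun y => y ^ q⁻¹ / r) ⟨fun x (hx : 0 < x) => ?_,
    fun y (hy : 0 < y) => ?_⟩ (fun x (hx : 0 < x) => ?_) (fun y (hy : 0 < y) => ?_)
  · simp only [rpow_rpow_inv (mul_pos hr hx).le hq, mul_div_cancel_left₀ _ hr.ne']
  · simp only [mul_div_cancel₀ _ hr.ne', rpow_inv_rpow hy.le hq]
  · exact rpow_pos_of_pos (mul_pos hr hx) _
  · exact div_pos (rpow_pos_of_pos hy _) hr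

theorem map_mul_rpow_rpowMeasure (a : ℝ) {q r : ℝ} (hq : q ≠ 0) (hr : 0 < r) :
    (rpowMeasure a).map (fun x => (r * x) ^ q) =
      ENNReal.ofReal (|q| * r ^ a)⁻¹ • rpowMeasure (a / q) := by
  have hderiv : ∀ x ∈ Set.Ioi (0 : ℝ),
      HasDerivWithinAt (fun x => (r * x) ^ q) (r * q * (r * x) ^ (q - 1)) (Set.Ioi 0) x :=
    fun x (hx : 0 < x) => ((hasDerivAt_const_mul r).rpow_const
      (.inl (mul_pos hr hx).ne')).hasDerivWithinAt
  have hdensity : ∀ x, 0 < x → (|q| * r ^ a)⁻¹ *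
      (|r * q * (r * x) ^ (q - 1)| * ((r * x) ^ q) ^ (a / q - 1)) = x ^ (a - 1) := by
    intro x hx
    have hrx := mul_pos hr hx
    rw [abs_mul, abs_mul, abs_of_pos hr, abs_of_pos (rpow_pos_of_pos hrx _), ← rpow_mul hrx.le,
      mul_assoc _ ((r * x) ^ _), ← rpow_add hrx]
    have hexp : q - 1 + q * (a / q - 1) = a - 1 := by field_simp; ring
    rw [hexp, mul_rpow hr.le hx.le, rpow_sub_one hr.ne']
    have := abs_pos.2 hq
    have := rpow_pos_of_pos hr a
    field_simp
  refine Measure.ext_of_lintegral _ fun f hf => ?_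
  have hbij := bijOn_mul_rpow_Ioi hq hr
  have hcov := lintegral_image_eq_lintegral_abs_deriv_mul measurableSet_Ioi hderiv hbij.injOn
    fun y => ENNReal.ofReal (y ^ (a / q - 1)) * f y
  rw [hbij.image_eq] at hcov
  rw [lintegral_map hf (by fun_prop), lintegral_smul_measure, smul_eq_mul,
    lintegral_rpowMeasure _ (by fun_prop), lintegral_rpowMeasure _ hf, hcov,
    ← lintegral_const_mul _ (by fun_prop)]
  refine setLIntegral_congr_fun measurableSet_Ioi fun x (hx : 0 < x) => ?_
  rw [← hdensity x hx, ENNReal.ofReal_mul (by positivity), ENNReal.ofReal_mul (by positivity)]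
  ring

lemma map_div_left_rpowMeasure_zero {c : ℝ} (hc : 0 < c) :
    (rpowMeasure 0).map (c / ·) = rpowMeasure 0 := by
  simpa [rpow_neg_one, div_eq_inv_mul, mul_comm] using
    map_mul_rpow_rpowMeasure 0 (neg_ne_zero.2 one_ne_zero) (inv_pos.2 hc)

lemma lintegral_exp_neg_mul_rpowMeasure {a c : ℝ} (ha : 0 < a) (hc : 0 < c) :
    ∫⁻ x, ENNReal.ofReal (exp (-(c * x))) ∂rpowMeasure a =
      ENNReal.ofReal (c ^ (-a) * Real.Gamma a) := by
  have hint := integral_rpow_mul_exp_neg_mul_Ioi ha hc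
  rw [rpow_neg hc.le, ← inv_rpow hc.le, ← one_div, ← hint, lintegral_rpowMeasure _ (by fun_prop),
    ofReal_integral_eq_lintegral_ofReal (.of_integral_ne_zero (by rw [hint]; positivity))]
  · refine setLIntegral_congr_fun measurableSet_Ioi fun x (hx : 0 < x) => ?_
    exact (ENNReal.ofReal_mul (rpow_pos_of_pos hx _).le).symm
  · filter_upwards [ae_restrict_mem measurableSet_Ioi] with x (hx : 0 < x)
    positivity

lemma lintegral_exp_neg_rpowMeasure {a : ℝ} (ha : 0 < a) :
    ∫⁻ x, ENNReal.ofReal (exp (-x)) ∂rpowMeasure a = ENNReal.ofReal (Real.Gamma a) := by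
  simpa using lintegral_exp_neg_mul_rpowMeasure ha one_pos

theorem lintegral_one_add_rpow_neg_rpowMeasure {a b : ℝ} (ha : 0 < a) (hb : 0 < b) :
    ENNReal.ofReal (Real.Gamma (a + b)) *
        ∫⁻ v, ENNReal.ofReal ((1 + v) ^ (-(a + b))) ∂rpowMeasure a =
      ENNReal.ofReal (Real.Gamma a) * ENNReal.ofReal (Real.Gamma b) := by
  calc
    _ = ∫⁻ v, ∫⁻ y, ENNReal.ofReal (exp (-((1 + v) * y))) ∂rpowMeasure (a + b) ∂rpowMeasure a := by
      rw [← lintegral_const_mul _ (by fun_prop)]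
      refine lintegral_congr_ae ((ae_rpowMeasure_pos a).mono fun v hv => ?_)
      dsimp only
      rw [lintegral_exp_neg_mul_rpowMeasure (add_pos ha hb) (by positivity), mul_comm,
        ENNReal.ofReal_mul (by positivity)]
    _ = ∫⁻ y, ∫⁻ v, ENNReal.ofReal (exp (-((1 + v) * y))) ∂rpowMeasure a ∂rpowMeasure (a + b) :=
      lintegral_lintegral_swap (by unfold Function.uncurry; fun_prop)
    _ = ∫⁻ y, ENNReal.ofReal (exp (-y)) * ENNReal.ofReal (y ^ (-a) * Real.Gamma a)
          ∂rpowMeasure (a + b) := by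
      refine lintegral_congr_ae ((ae_rpowMeasure_pos _).mono fun y hy => ?_)
      dsimp only
      rw [← lintegral_exp_neg_mul_rpowMeasure ha hy, ← lintegral_const_mul _ (by fun_prop)]
      refine lintegral_congr fun v => ?_
      rw [← ENNReal.ofReal_mul (exp_pos _).le, ← exp_add]
      ring_nf
    _ = ENNReal.ofReal (Real.Gamma a) * ∫⁻ y, ENNReal.ofReal (exp (-y)) ∂rpowMeasure b := by
      rw [← neg_add_cancel_left a b, lintegral_rpowMeasure_add (-a) (a + b) (by fun_prop),
        neg_add_cancel_left, ← lintegral_const_mul _ (by fun_prop)]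
      refine lintegral_congr_ae ((ae_rpowMeasure_pos _).mono fun y hy => ?_)
      dsimp only
      rw [ENNReal.ofReal_mul (by positivity)]
      ring
    _ = _ := by rw [lintegral_exp_neg_rpowMeasure hb]

theorem integral_one_add_rpow_neg_rpowMeasure {a b : ℝ} (ha : 0 < a) (hb : 0 < b) :
    ∫ v, (1 + v) ^ (-(a + b)) ∂rpowMeasure a =
      Real.Gamma a * Real.Gamma b / Real.Gamma (a + b) := by
  have hnonneg : 0 ≤ᵐ[rpowMeasure a] fun v : ℝ => (1 + v) ^ (-(a + b)) :=
    (ae_rpowMeasure_pos a).mono fun v hv => by simp only [Pi.zero_apply]; positivity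
  rw [eq_div_iff (Real.Gamma_pos_of_pos (add_pos ha hb)).ne', mul_comm,
    integral_eq_lintegral_of_nonneg_ae hnonneg (Measurable.aestronglyMeasurable (by fun_prop))]
  have h := congrArg ENNReal.toReal (lintegral_one_add_rpow_neg_rpowMeasure ha hb)
  simpa only [ENNReal.toReal_mul, ENNReal.toReal_ofReal (Real.Gamma_pos_of_pos ha).le,
    ENNReal.toReal_ofReal (Real.Gamma_pos_of_pos hb).le,
    ENNReal.toReal_ofReal (Real.Gamma_pos_of_pos (add_pos ha hb)).le] using h

/-- A measure `μ` is homogeneous of degree `a` if `μ (c • s) = c ^ a * μ s` for all `c > 0`. The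
condition is stated for the push-forward under the dilation by `c`, whence the sign of the
exponent. -/
def IsHomogeneousMeasure {E : Type*} [MeasurableSpace E] [SMul ℝ E] (a : ℝ) (μ : Measure E) :
    Prop :=
  ∀ c : ℝ, 0 < c → μ.map (c • ·) = ENNReal.ofReal (c ^ (-a)) • μ

namespace IsHomogeneousMeasure

variable {E F : Type*} [MeasurableSpace E] [SMul ℝ E] [MeasurableConstSMul ℝ E]
  [MeasurableSpace F] [SMul ℝ F] [MeasurableConstSMul ℝ F] {a : ℝ}

lemma map {μ : Measure E} (hμ : IsHomogeneousMeasure a μ) {f : E → F} (hf : Measurable f)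
    (hsmul : ∀ c : ℝ, 0 < c → ∀ x, f (c • x) = c • f x) : IsHomogeneousMeasure a (μ.map f) := by
  intro c hc
  rw [← Measure.map_smul, ← hμ c hc, Measure.map_map (by fun_prop) hf,
    Measure.map_map hf (by fun_prop)]
  simp only [Function.comp_def, hsmul c hc]

lemma lintegral_comp_inv_smul {μ : Measure E} (hμ : IsHomogeneousMeasure a μ) {f : E → ℝ≥0∞}
    (hf : Measurable f) {u : ℝ} (hu : 0 < u) :
    ∫⁻ x, f (u⁻¹ • x) ∂μ = ENNReal.ofReal (u ^ a) * ∫⁻ x, f x ∂μ := by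
  have hmap := hμ u⁻¹ (inv_pos.2 hu)
  rw [inv_rpow hu.le, rpow_neg hu.le, inv_inv] at hmap
  rw [← smul_eq_mul, ← lintegral_smul_measure, ← hmap, lintegral_map hf (by fun_prop)]

theorem Gamma_smul_eq_smul_rpowMeasure {ν : Measure ℝ} [SFinite ν] (hν : IsHomogeneousMeasure a ν)
    (ha : 0 < a) (hpos : ∀ᵐ x ∂ν, 0 < x) :
    ENNReal.ofReal (Real.Gamma a) • ν =
      (∫⁻ x, ENNReal.ofReal (exp (-x)) ∂ν) • rpowMeasure a := by
  refine Measure.ext_of_lintegral _ fun f hf => ?_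
  have hscale {g : ℝ → ℝ≥0∞} (hg : Measurable g) {u : ℝ} (hu : 0 < u) :
      ∫⁻ x, g (x / u) ∂ν = ENNReal.ofReal (u ^ a) * ∫⁻ x, g x ∂ν := by
    simpa only [smul_eq_mul, inv_mul_eq_div] using hν.lintegral_comp_inv_smul hg hu
  simp_rw [lintegral_smul_measure, smul_eq_mul]
  calc
    _ = ∫⁻ u, ∫⁻ x, ENNReal.ofReal (exp (-u)) * f (x / u) ∂ν ∂rpowMeasure 0 := by
      rw [← lintegral_exp_neg_rpowMeasure ha, ← lintegral_mul_const _ (by fun_prop),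
        lintegral_rpowMeasure_eq_lintegral_zero a (by fun_prop)]
      refine lintegral_congr_ae ((ae_rpowMeasure_pos 0).mono fun u hu => ?_)
      dsimp only
      rw [lintegral_const_mul _ (by fun_prop), hscale hf hu]
      ring
    _ = ∫⁻ x, ∫⁻ u, ENNReal.ofReal (exp (-u)) * f (x / u) ∂rpowMeasure 0 ∂ν :=
      lintegral_lintegral_swap (by unfold Function.uncurry; fun_prop)
    -- Substituting `u = x / v` makes the argument of `f` independent of the variable of `ν`.
    _ = ∫⁻ x, ∫⁻ v, ENNReal.ofReal (exp (-(x / v))) * f v ∂rpowMeasure 0 ∂ν := by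
      refine lintegral_congr_ae (hpos.mono fun x hx => ?_)
      dsimp only
      nth_rw 1 [← map_div_left_rpowMeasure_zero hx]
      rw [lintegral_map (by fun_prop) (by fun_prop)]
      simp_rw [div_div_cancel₀ hx.ne']
    _ = ∫⁻ v, ∫⁻ x, ENNReal.ofReal (exp (-(x / v))) * f v ∂ν ∂rpowMeasure 0 :=
      lintegral_lintegral_swap (by unfold Function.uncurry; fun_prop)
    _ = _ := by
      rw [← lintegral_const_mul _ hf, lintegral_rpowMeasure_eq_lintegral_zero a (by fun_prop)]
      refine lintegral_congr_ae ((ae_rpowMeasure_pos 0).mono fun v hv => ?_)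
      dsimp only
      rw [lintegral_mul_const _ (by fun_prop),
        hscale (g := fun x => ENNReal.ofReal (exp (-x))) (by fun_prop) hv]
      ring

end IsHomogeneousMeasure

section Liouville

variable {ι : Type*} [Fintype ι]

lemma pi_rpowMeasure (p : ι → ℝ) :
    Measure.pi (fun k => rpowMeasure (p k)) =
      (volume.restrict (Set.univ.pi fun _ : ι => Set.Ioi 0)).withDensity
        fun x => ∏ k, ENNReal.ofReal (x k ^ (p k - 1)) := by
  rw [volume_pi, Measure.restrict_pi_pi]
  exact pi_withDensity_eq_withDensity_prod (μ := fun _ => volume.restrict (Set.Ioi 0))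
    (f := fun k y => ENNReal.ofReal (y ^ (p k - 1))) fun k => by fun_prop

lemma integral_pi_rpowMeasure {E : Type*} [NormedAddCommGroup E] [NormedSpace ℝ E] (p : ι → ℝ)
    (f : (ι → ℝ) → E) :
    ∫ x, f x ∂Measure.pi (fun k => rpowMeasure (p k)) =
      ∫ x in Set.univ.pi fun _ : ι => Set.Ioi 0, (∏ k, x k ^ (p k - 1)) • f x := by
  rw [pi_rpowMeasure, integral_withDensity_eq_integral_toReal_smul (by fun_prop)
    (ae_of_all _ fun x => ENNReal.prod_lt_top fun k _ => ENNReal.ofReal_lt_top)]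
  refine setIntegral_congr_fun (.univ_pi fun _ => measurableSet_Ioi) fun x hx => ?_
  have hx (k : ι) : 0 < x k := hx k trivial
  simp [ENNReal.toReal_prod, ENNReal.toReal_ofReal (rpow_pos_of_pos (hx _) _).le]

lemma ae_pi_rpowMeasure_pos (p : ι → ℝ) :
    ∀ᵐ x ∂Measure.pi (fun k => rpowMeasure (p k)), ∀ k, 0 < x k :=
  ae_all_iff.2 fun k => Measure.tendsto_eval_ae_ae.eventually (ae_rpowMeasure_pos (p k))

lemma map_pi_mul_rpow_rpowMeasure (p : ι → ℝ) {q r : ι → ℝ} (hq : ∀ k, q k ≠ 0)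
    (hr : ∀ k, 0 < r k) :
    (Measure.pi fun k => rpowMeasure (p k)).map (fun x k => (r k * x k) ^ q k) =
      ENNReal.ofReal (∏ k, (|q k| * r k ^ p k)⁻¹) •
        Measure.pi fun k => rpowMeasure (p k / q k) := by
  have hmap (k : ι) := map_mul_rpow_rpowMeasure (p k) (hq k) (hr k)
  have (k : ι) : SigmaFinite ((rpowMeasure (p k)).map fun x => (r k * x) ^ q k) := by
    rw [hmap]
    exact SMul.sigmaFinite _
  rw [Measure.pi_map_pi (f := fun k x => (r k * x) ^ q k) fun k => by fun_prop, ENNReal.ofReal,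
    Real.toNNReal_prod_of_nonneg fun k _ => by have := hr k; positivity]
  simp_rw [hmap]
  exact pi_nnreal_smul _

lemma isHomogeneousMeasure_pi_rpowMeasure (a : ι → ℝ) :
    IsHomogeneousMeasure (∑ k, a k) (Measure.pi fun k => rpowMeasure (a k)) := by
  intro c hc
  have h := map_pi_mul_rpow_rpowMeasure a (q := 1) (r := fun _ => c) (by simp) fun _ => hc
  rw [rpow_neg hc.le, rpow_sum_of_pos hc]
  simpa [Pi.smul_def] using h

lemma lintegral_exp_neg_sum_pi_rpowMeasure {a : ι → ℝ} (ha : ∀ k, 0 < a k) :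
    ∫⁻ x, ENNReal.ofReal (exp (-∑ k, x k)) ∂Measure.pi (fun k => rpowMeasure (a k)) =
      ENNReal.ofReal (∏ k, Real.Gamma (a k)) := by
  simp_rw [← Finset.sum_neg_distrib, exp_sum,
    ENNReal.ofReal_prod_of_nonneg fun _ _ => (exp_pos _).le]
  rw [lintegral_fintype_prod_eq_prod (f := fun _ x => ENNReal.ofReal (exp (-x)))
      fun _ => by fun_prop,
    ENNReal.ofReal_prod_of_nonneg fun k _ => (Real.Gamma_pos_of_pos (ha k)).le]
  simp_rw [lintegral_exp_neg_rpowMeasure (ha _)]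

variable [Nonempty ι]

theorem Gamma_smul_map_sum_pi_rpowMeasure {a : ι → ℝ} (ha : ∀ k, 0 < a k) :
    ENNReal.ofReal (Real.Gamma (∑ k, a k)) •
        (Measure.pi fun k => rpowMeasure (a k)).map (fun x => ∑ k, x k) =
      ENNReal.ofReal (∏ k, Real.Gamma (a k)) • rpowMeasure (∑ k, a k) := by
  have hsum : Measurable fun x : ι → ℝ => ∑ k, x k := by fun_prop
  rw [← lintegral_exp_neg_sum_pi_rpowMeasure ha,
    ← lintegral_map (f := fun y => ENNReal.ofReal (exp (-y))) (by fun_prop) hsum]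
  have hhom := (isHomogeneousMeasure_pi_rpowMeasure a).map hsum fun c _ x => by
    simp only [Pi.smul_apply, Finset.smul_sum]
  refine hhom.Gamma_smul_eq_smul_rpowMeasure
    (Finset.sum_pos (fun k _ => ha k) Finset.univ_nonempty) ?_
  rw [ae_map_iff hsum.aemeasurable measurableSet_Ioi]
  filter_upwards [ae_pi_rpowMeasure_pos a] with x hx
  exact Finset.sum_pos (fun k _ => hx k) Finset.univ_nonempty

theorem Gamma_smul_integral_comp_sum_mul_rpow {E : Type*} [NormedAddCommGroup E] [NormedSpace ℝ E]
    {p q r : ι → ℝ} (hpq : ∀ k, 0 < p k / q k) (hr : ∀ k, 0 < r k) {f : ℝ → E}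
    (hf : StronglyMeasurable f) :
    Real.Gamma (∑ k, p k / q k) •
        ∫ x, f (∑ k, (r k * x k) ^ q k) ∂Measure.pi (fun k => rpowMeasure (p k)) =
      ((∏ k, Real.Gamma (p k / q k)) / ∏ k, |q k| * r k ^ p k) •
        ∫ v, f v ∂rpowMeasure (∑ k, p k / q k) := by
  have hq (k : ι) : q k ≠ 0 := (div_ne_zero_iff.1 (hpq k).ne').2
  have hΓ : 0 < Real.Gamma (∑ k, p k / q k) :=
    Real.Gamma_pos_of_pos (Finset.sum_pos (fun k _ => hpq k) Finset.univ_nonempty)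
  have hΓprod : 0 ≤ ∏ k, Real.Gamma (p k / q k) :=
    Finset.prod_nonneg fun k _ => (Real.Gamma_pos_of_pos (hpq k)).le
  have hconst : 0 ≤ ∏ k, (|q k| * r k ^ p k)⁻¹ :=
    Finset.prod_nonneg fun k _ => by have := hr k; positivity
  have hsubst : ∫ x, f (∑ k, (r k * x k) ^ q k) ∂Measure.pi (fun k => rpowMeasure (p k)) =
      (∏ k, (|q k| * r k ^ p k)⁻¹) •
        ∫ y, f (∑ k, y k) ∂Measure.pi (fun k => rpowMeasure (p k / q k)) := by
    rw [← ENNReal.toReal_ofReal hconst, ← integral_smul_measure,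
      ← map_pi_mul_rpow_rpowMeasure p hq hr,
      integral_map (φ := fun (x : ι → ℝ) k => (r k * x k) ^ q k) (f := fun y => f (∑ k, y k))
        (Measurable.aemeasurable (by fun_prop))
        (hf.comp_measurable (by fun_prop)).aestronglyMeasurable]
  have hliouville := congrArg (fun μ => ∫ v, f v ∂μ) (Gamma_smul_map_sum_pi_rpowMeasure hpq)
  simp only [integral_smul_measure, ENNReal.toReal_ofReal hΓ.le, ENNReal.toReal_ofReal hΓprod]
    at hliouville
  rw [integral_map (by fun_prop) hf.aestronglyMeasurable] at hliouville
  rw [hsubst, smul_comm, hliouville, smul_smul, Finset.prod_inv_distrib, inv_mul_eq_div]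

theorem lemma2_integral_value_general {p q r : ι → ℝ} {s t : ℝ} (hpq : ∀ k, 0 < p k / q k)
    (hr : ∀ k, 0 < r k) (ht1 : 0 < (∑ k, p k / q k) - t) (ht2 : (∑ k, p k / q k) - t < s) :
    ∫ x in Set.univ.pi (fun _ : ι => Set.Ioi (0 : ℝ)),
        (∏ k, x k ^ (p k - 1)) * (∑ k, (r k * x k) ^ q k) ^ (-t) *
          (1 + ∑ k, (r k * x k) ^ q k) ^ (-s) =
      (∏ k, Real.Gamma (p k / q k)) * Real.Gamma ((∑ k, p k / q k) - t) *
          Real.Gamma (s + t - ∑ k, p k / q k) /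
        ((∏ k, |q k| * r k ^ p k) * Real.Gamma (∑ k, p k / q k) * Real.Gamma s) := by
  have hΓ : Real.Gamma (∑ k, p k / q k) ≠ 0 := (Real.Gamma_pos_of_pos <|
    Finset.sum_pos (fun k _ => hpq k) Finset.univ_nonempty).ne'
  have horthant := integral_pi_rpowMeasure p fun x =>
    (∑ k, (r k * x k) ^ q k) ^ (-t) * (1 + ∑ k, (r k * x k) ^ q k) ^ (-s)
  have hradial := Gamma_smul_integral_comp_sum_mul_rpow hpq hr
    (f := fun v => v ^ (-t) * (1 + v) ^ (-s)) (Measurable.stronglyMeasurable (by fun_prop))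
  have hbeta : ∫ v, v ^ (-t) * (1 + v) ^ (-s) ∂rpowMeasure (∑ k, p k / q k) =
      Real.Gamma ((∑ k, p k / q k) - t) * Real.Gamma (s + t - ∑ k, p k / q k) / Real.Gamma s := by
    have h := integral_one_add_rpow_neg_rpowMeasure ht1 (sub_pos.2 ht2)
    rwa [add_sub_cancel, ← sub_add, sub_add_eq_add_sub, ← neg_add_eq_sub t,
      integral_rpowMeasure_add, neg_add_eq_sub] at h
  simp only [smul_eq_mul, ← mul_assoc] at horthant hradial
  rw [← horthant, eq_div_of_mul_eq hΓ ((mul_comm _ _).trans hradial), hbeta]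
  ring

end Liouville

/-- **Lemma 2 of the paper.** The value of an `n`-fold improper integral over the
positive orthant. -/
theorem lemma2_integral_value (n : ℕ) (hn : 1 ≤ n) (p q r : Fin n → ℝ) (s t : ℝ)
    (hp : ∀ k, 0 < p k) (hq : ∀ k, 0 < q k) (hr : ∀ k, 0 < r k) (hs : 0 < s)
    (ht1 : 0 < (∑ k, p k / q k) - t) (ht2 : (∑ k, p k / q k) - t < s) :
    ∫ x in Set.univ.pi (fun _ : Fin n => Set.Ioi (0 : ℝ)),
        (∏ k, x k ^ (p k - 1)) * (∑ k, (r k * x k) ^ q k) ^ (-t) *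
          (1 + ∑ k, (r k * x k) ^ q k) ^ (-s) =
      (∏ k, Real.Gamma (p k / q k)) * Real.Gamma ((∑ k, p k / q k) - t) *
          Real.Gamma (s + t - ∑ k, p k / q k) /
        ((∏ k, q k * r k ^ p k) * Real.Gamma (∑ k, p k / q k) * Real.Gamma s) := by
  have : Nonempty (Fin n) := ⟨⟨0, hn⟩⟩
  simpa only [abs_of_pos (hq _)] using
    lemma2_integral_value_general (fun k => div_pos (hp k) (hq k)) hr ht1 ht2
end

section
/- Let n ≥ 1, let p_k, q_k, r_k (k = 1,…,n) and s be positive real numbers with 0 < Σ_{k=1}^n p_k/q_k < s. Then ∫_{(0,∞)^n} [∏_{k=1}^n x_k^{p_k−1}] · [1 + Σ_{k=1}^n (r_k x_k)^{q_k}]^{−s} dx_1…dx_n = [∏_{k=1}^n Γ(p_k/q_k)] · Γ(s − Σ_{k=1}^n p_k/q_k) / ([∏_{k=1}^n q_k r_k^{p_k}] · Γ(s)). -/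
open MeasureTheory Real

/-!
Put `A x = 1 + ∑ k, (r k * x k) ^ q k`. Since `Γ(s) A ^ (-s) = ∫₀^∞ t ^ (s - 1) exp (-t A) dt`,
the integral is, up to the factor `Γ(s)`, a mixture over `t` of the integrals of
`∏ k, x k ^ (p k - 1)` against `exp (-t A)`. For fixed `t` the exponential factors over the
coordinates and each factor is a Gamma integral equal to a constant times `t ^ (-p k / q k)`, so
the remaining integral over `t` is `Γ(s - ∑ k, p k / q k)`. All integrands are nonnegative, so the
convergence of this last integral is what justifies exchanging the order of integration.
-/

section Mixture

variable {α : Type*} [MeasurableSpace α] {μ : Measure α} [SFinite μ] {f A : α → ℝ} {s : ℝ}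

theorem integrable_prod_rpow_mul_mul_exp_neg_mul
    (hf : AEStronglyMeasurable f μ) (hA : AEStronglyMeasurable A μ) (hf_nonneg : 0 ≤ᵐ[μ] f)
    (h_int : ∀ t, 0 < t → Integrable (fun x ↦ f x * exp (-(t * A x))) μ)
    (h_laplace : IntegrableOn (fun t ↦ t ^ (s - 1) * ∫ x, f x * exp (-(t * A x)) ∂μ)
      (Set.Ioi 0)) :
    Integrable (fun z : α × ℝ ↦ z.2 ^ (s - 1) * (f z.1 * exp (-(z.2 * A z.1))))
      (μ.prod (volume.restrict (Set.Ioi 0))) := by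
  have h_meas : AEStronglyMeasurable
      (fun z : α × ℝ ↦ z.2 ^ (s - 1) * (f z.1 * exp (-(z.2 * A z.1))))
      (μ.prod (volume.restrict (Set.Ioi 0))) := by
    have h_snd : Measurable fun z : α × ℝ ↦ z.2 := measurable_snd
    exact (h_snd.pow_const _).aestronglyMeasurable.mul <| hf.comp_fst.mul <|
      continuous_exp.comp_aestronglyMeasurable (h_snd.aestronglyMeasurable.mul hA.comp_fst).neg
  refine (integrable_prod_iff' h_meas).2 ⟨?_, h_laplace.congr ?_⟩
  · filter_upwards [ae_restrict_mem measurableSet_Ioi] with t ht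
    exact (h_int t ht).const_mul _
  · filter_upwards [ae_restrict_mem measurableSet_Ioi] with t (ht : 0 < t)
    rw [← integral_const_mul]
    refine integral_congr_ae ?_
    filter_upwards [hf_nonneg] with x (hx : 0 ≤ f x)
    exact (norm_of_nonneg (by positivity)).symm

theorem Gamma_mul_integral_mul_rpow_neg (hs : 0 < s)
    (hf : AEStronglyMeasurable f μ) (hA : AEStronglyMeasurable A μ) (hf_nonneg : 0 ≤ᵐ[μ] f)
    (hA_pos : ∀ᵐ x ∂μ, 0 < A x)
    (h_int : ∀ t, 0 < t → Integrable (fun x ↦ f x * exp (-(t * A x))) μ)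
    (h_laplace : IntegrableOn (fun t ↦ t ^ (s - 1) * ∫ x, f x * exp (-(t * A x)) ∂μ)
      (Set.Ioi 0)) :
    Gamma s * ∫ x, f x * A x ^ (-s) ∂μ =
      ∫ t in Set.Ioi 0, t ^ (s - 1) * ∫ x, f x * exp (-(t * A x)) ∂μ :=
  calc Gamma s * ∫ x, f x * A x ^ (-s) ∂μ
    _ = ∫ x, (∫ t in Set.Ioi 0, t ^ (s - 1) * (f x * exp (-(t * A x)))) ∂μ := by
      rw [← integral_const_mul]
      refine integral_congr_ae ?_
      filter_upwards [hA_pos] with x hx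
      have h_gamma : ∫ t in Set.Ioi 0, t ^ (s - 1) * exp (-(A x * t)) = A x ^ (-s) * Gamma s := by
        rw [integral_rpow_mul_exp_neg_mul_Ioi hs hx, one_div, inv_rpow hx.le, rpow_neg hx.le]
      simp only [mul_left_comm _ (f x), mul_comm _ (A x), integral_const_mul, h_gamma]
      ring
    _ = ∫ t in Set.Ioi 0, ∫ x, t ^ (s - 1) * (f x * exp (-(t * A x))) ∂μ :=
      integral_integral_swap
        (integrable_prod_rpow_mul_mul_exp_neg_mul hf hA hf_nonneg h_int h_laplace)
    _ = ∫ t in Set.Ioi 0, t ^ (s - 1) * ∫ x, f x * exp (-(t * A x)) ∂μ := by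
      simp only [integral_const_mul]

end Mixture

section UnivPi

variable {ι 𝕜 : Type*} [Fintype ι] [RCLike 𝕜] {E : ι → Type*} [∀ i, MeasurableSpace (E i)]
  {μ : ∀ i, Measure (E i)} [∀ i, SigmaFinite (μ i)] {S : ∀ i, Set (E i)} {f : ∀ i, E i → 𝕜}

theorem setIntegral_univ_pi_prod_eq_prod :
    ∫ x in Set.univ.pi S, ∏ i, f i (x i) ∂Measure.pi μ = ∏ i, ∫ y in S i, f i y ∂μ i := by
  rw [Measure.restrict_pi_pi, integral_fintype_prod_eq_prod]

theorem integrableOn_univ_pi_prod (hf : ∀ i, IntegrableOn (f i) (S i) (μ i)) :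
    IntegrableOn (fun x : ∀ i, E i ↦ ∏ i, f i (x i)) (Set.univ.pi S) (Measure.pi μ) := by
  rw [IntegrableOn, Measure.restrict_pi_pi]
  exact Integrable.fintype_prod_dep hf

end UnivPi

section OneVariable

variable {p q r t : ℝ}

theorem rpow_mul_exp_neg_mul_mul_rpow_eqOn (hr : 0 < r) :
    Set.EqOn (fun x ↦ x ^ (p - 1) * exp (-(t * (r * x) ^ q)))
      (fun x ↦ x ^ (p - 1) * exp (-(t * r ^ q) * x ^ q)) (Set.Ioi 0) := by
  intro x (hx : 0 < x)
  simp only [mul_rpow hr.le hx.le, ← neg_mul, mul_assoc]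

theorem integrableOn_rpow_mul_exp_neg_mul_mul_rpow (hp : 0 < p) (hq : 0 < q) (hr : 0 < r)
    (ht : 0 < t) :
    IntegrableOn (fun x ↦ x ^ (p - 1) * exp (-(t * (r * x) ^ q))) (Set.Ioi 0) :=
  (integrableOn_rpow_mul_exp_neg_mul_rpow (by linarith) hq (by positivity)).congr_fun
    (rpow_mul_exp_neg_mul_mul_rpow_eqOn hr).symm measurableSet_Ioi

theorem integral_rpow_mul_exp_neg_mul_mul_rpow (hp : 0 < p) (hq : 0 < q) (hr : 0 < r)
    (ht : 0 < t) :
    ∫ x in Set.Ioi 0, x ^ (p - 1) * exp (-(t * (r * x) ^ q)) =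
      t ^ (-(p / q)) * (Gamma (p / q) / (q * r ^ p)) := by
  have h_scale : (r ^ q) ^ (-(p / q)) = (r ^ p)⁻¹ := by
    rw [← rpow_mul hr.le, mul_neg, mul_div_cancel₀ p hq.ne', rpow_neg hr.le]
  rw [setIntegral_congr_fun measurableSet_Ioi (rpow_mul_exp_neg_mul_mul_rpow_eqOn hr),
    integral_rpow_mul_exp_neg_mul_rpow hq (by linarith) (by positivity), sub_add_cancel, neg_div,
    mul_rpow ht.le (by positivity), h_scale]
  field_simp

end OneVariable

section Orthant

variable {ι : Type*} [Fintype ι] {p q r : ι → ℝ} {t : ℝ}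

theorem prod_rpow_mul_exp_neg_mul_one_add_sum (x : ι → ℝ) :
    (∏ k, x k ^ (p k - 1)) * exp (-(t * (1 + ∑ k, (r k * x k) ^ q k))) =
      exp (-t) * ∏ k, x k ^ (p k - 1) * exp (-(t * (r k * x k) ^ q k)) := by
  rw [mul_add, mul_one, neg_add, exp_add, Finset.mul_sum, ← Finset.sum_neg_distrib, exp_sum,
    Finset.prod_mul_distrib, mul_left_comm]

theorem integrableOn_prod_rpow_mul_exp_neg_mul_one_add_sum (hp : ∀ k, 0 < p k)
    (hq : ∀ k, 0 < q k) (hr : ∀ k, 0 < r k) (ht : 0 < t) :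
    IntegrableOn
      (fun x : ι → ℝ ↦ (∏ k, x k ^ (p k - 1)) * exp (-(t * (1 + ∑ k, (r k * x k) ^ q k))))
      (Set.univ.pi fun _ ↦ Set.Ioi 0) := by
  simp only [prod_rpow_mul_exp_neg_mul_one_add_sum]
  exact (integrableOn_univ_pi_prod fun k ↦
    integrableOn_rpow_mul_exp_neg_mul_mul_rpow (hp k) (hq k) (hr k) ht).const_mul _

theorem integral_prod_rpow_mul_exp_neg_mul_one_add_sum (hp : ∀ k, 0 < p k)
    (hq : ∀ k, 0 < q k) (hr : ∀ k, 0 < r k) (ht : 0 < t) :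
    ∫ x in Set.univ.pi (fun _ : ι ↦ Set.Ioi (0 : ℝ)),
        (∏ k, x k ^ (p k - 1)) * exp (-(t * (1 + ∑ k, (r k * x k) ^ q k))) =
      (∏ k, Gamma (p k / q k) / (q k * r k ^ p k)) * (exp (-t) * t ^ (-∑ k, p k / q k)) := by
  simp only [prod_rpow_mul_exp_neg_mul_one_add_sum]
  rw [integral_const_mul, volume_pi,
    setIntegral_univ_pi_prod_eq_prod (f := fun k y ↦ y ^ (p k - 1) * exp (-(t * (r k * y) ^ q k)))]
  simp only [fun k ↦ integral_rpow_mul_exp_neg_mul_mul_rpow (hp k) (hq k) (hr k) ht]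
  rw [Finset.prod_mul_distrib, ← rpow_sum_of_pos ht, Finset.sum_neg_distrib]
  ring

theorem rpow_mul_integral_prod_rpow_mul_exp_neg_eqOn (hp : ∀ k, 0 < p k)
    (hq : ∀ k, 0 < q k) (hr : ∀ k, 0 < r k) (s : ℝ) :
    Set.EqOn
      (fun t ↦ t ^ (s - 1) * ∫ x in Set.univ.pi (fun _ : ι ↦ Set.Ioi (0 : ℝ)),
        (∏ k, x k ^ (p k - 1)) * exp (-(t * (1 + ∑ k, (r k * x k) ^ q k))))
      (fun t ↦ (∏ k, Gamma (p k / q k) / (q k * r k ^ p k)) *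
        (exp (-t) * t ^ (s - ∑ k, p k / q k - 1)))
      (Set.Ioi 0) := by
  intro t (ht : 0 < t)
  have h_exp : s - ∑ k, p k / q k - 1 = (s - 1) + -∑ k, p k / q k := by ring
  simp only [integral_prod_rpow_mul_exp_neg_mul_one_add_sum hp hq hr ht, h_exp, rpow_add ht]
  ring

theorem Gamma_mul_integral_prod_rpow_mul_one_add_sum_rpow_neg (hp : ∀ k, 0 < p k)
    (hq : ∀ k, 0 < q k) (hr : ∀ k, 0 < r k) {s : ℝ} (hs : ∑ k, p k / q k < s) :
    Gamma s * ∫ x in Set.univ.pi (fun _ : ι ↦ Set.Ioi (0 : ℝ)),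
        (∏ k, x k ^ (p k - 1)) * (1 + ∑ k, (r k * x k) ^ q k) ^ (-s) =
      (∏ k, Gamma (p k / q k) / (q k * r k ^ p k)) * Gamma (s - ∑ k, p k / q k) := by
  have h_diff : 0 < s - ∑ k, p k / q k := sub_pos.2 hs
  have hs_pos : 0 < s := (Finset.sum_nonneg fun k _ ↦ (div_pos (hp k) (hq k)).le).trans_lt hs
  have h_pos : ∀ᵐ x ∂volume.restrict (Set.univ.pi fun _ : ι ↦ Set.Ioi (0 : ℝ)), ∀ k, 0 < x k := by
    filter_upwards [ae_restrict_mem (.univ_pi fun _ ↦ measurableSet_Ioi)] with x hx k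
    exact hx k (Set.mem_univ k)
  have h_eqOn := rpow_mul_integral_prod_rpow_mul_exp_neg_eqOn hp hq hr s
  rw [Gamma_mul_integral_mul_rpow_neg hs_pos, setIntegral_congr_fun measurableSet_Ioi h_eqOn,
    integral_const_mul, Gamma_eq_integral h_diff]
  · exact Measurable.aestronglyMeasurable (by fun_prop)
  · exact Measurable.aestronglyMeasurable (by fun_prop)
  · filter_upwards [h_pos] with x hx
    exact Finset.prod_nonneg fun k _ ↦ rpow_nonneg (hx k).le _
  · filter_upwards [h_pos] with x hx
    exact add_pos_of_pos_of_nonneg one_pos <|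
      Finset.sum_nonneg fun k _ ↦ rpow_nonneg (mul_pos (hr k) (hx k)).le _
  · exact fun t ht ↦ integrableOn_prod_rpow_mul_exp_neg_mul_one_add_sum hp hq hr ht
  · exact IntegrableOn.congr_fun ((GammaIntegral_convergent h_diff).const_mul _) h_eqOn.symm
      measurableSet_Ioi

theorem lemma2_special_case_general (hp : ∀ k, 0 < p k) (hq : ∀ k, 0 < q k)
    (hr : ∀ k, 0 < r k) {s : ℝ} (hs : ∑ k, p k / q k < s) :
    ∫ x in Set.univ.pi (fun _ : ι ↦ Set.Ioi (0 : ℝ)),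
        (∏ k, x k ^ (p k - 1)) * (1 + ∑ k, (r k * x k) ^ q k) ^ (-s) =
      (∏ k, Gamma (p k / q k)) * Gamma (s - ∑ k, p k / q k) /
        ((∏ k, q k * r k ^ p k) * Gamma s) := by
  have hs_pos : 0 < s := (Finset.sum_nonneg fun k _ ↦ (div_pos (hp k) (hq k)).le).trans_lt hs
  rw [← div_div, eq_div_iff (Gamma_pos_of_pos hs_pos).ne', mul_comm,
    Gamma_mul_integral_prod_rpow_mul_one_add_sum_rpow_neg hp hq hr hs, Finset.prod_div_distrib,
    div_mul_eq_mul_div]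

end Orthant

/-- Special case (`t = 0`) of Lemma 2: the value of an `n`-fold improper integral
over the positive orthant. -/
theorem lemma2_special_case (n : ℕ) (hn : 1 ≤ n) (p q r : Fin n → ℝ) (s : ℝ)
    (hp : ∀ k, 0 < p k) (hq : ∀ k, 0 < q k) (hr : ∀ k, 0 < r k) (hs : 0 < s)
    (h1 : 0 < ∑ k, p k / q k) (h2 : (∑ k, p k / q k) < s) :
    ∫ x in Set.univ.pi (fun _ : Fin n => Set.Ioi (0 : ℝ)),
        (∏ k, x k ^ (p k - 1)) * (1 + ∑ k, (r k * x k) ^ q k) ^ (-s) =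
      (∏ k, Real.Gamma (p k / q k)) * Real.Gamma (s - ∑ k, p k / q k) /
        ((∏ k, q k * r k ^ p k) * Real.Gamma s) :=
  lemma2_special_case_general hp hq hr h2
end

section
/- Let a ∈ ℝ and b = (b_1,…,b_n), c = (c_1,…,c_n) ∈ ℝ^n with 0 < b_k < c_k for all k and a > b_1 + … + b_n. Let z_1,…,z_n be real-valued functions defined on a right neighborhood of 0, continuous at 0, with z_k(0) > 0 and z_k(ε) > 0 for all small ε > 0. Then lim_{ε→0+} ε^{−(b_1+…+b_n)} · F_A^{(n)}(a, b; c; 1 − z_1(ε)/ε, …, 1 − z_n(ε)/ε) = [Γ(a − Σ_{k=1}^n b_k)/Γ(a)] · ∏_{k=1}^n Γ(c_k)/(z_k(0)^{b_k} Γ(c_k − b_k)). -/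
open MeasureTheory Real Filter Topology

/-- The Lauricella function `F_A^{(n)}(a, b; c; x)` defined through its Euler-type
integral representation. -/
noncomputable def lauricellaFA {ι : Type*} [Fintype ι] (a : ℝ) (b c x : ι → ℝ) : ℝ :=
  (∏ i, Real.Gamma (c i) / (Real.Gamma (b i) * Real.Gamma (c i - b i))) *
    ∫ u in Set.univ.pi (fun _ : ι => Set.Icc (0 : ℝ) 1),
      (∏ i, u i ^ (b i - 1) * (1 - u i) ^ (c i - b i - 1)) * (1 - ∑ i, x i * u i) ^ (-a)

/-!
Writing `x = -w`, the product `(∏ w k ^ b k) * F_A(a, b; c; -w)` converges as all `w k → +∞`,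
independently of their relative rates; the claim is the case `w k = z k t / t - 1`, for which
`t * w k → z k 0`. When `c k - b k < 1`, the singularity at `u k = 1` leaves the rescaled Euler
integral without an integrable majorant. So expand `(1 + ∑ w k * u k) ^ (-a)` as a Gamma integral
over `s > 0`: by Fubini the `u`-integral splits into a product of one-dimensional Laplace
transforms of Beta weights at `s * w k`. The `k`-th transform, multiplied by the `b k`-th power of
its argument, is bounded and tends to `Γ(b k)` at infinity, so dominated convergence in `s`, with
majorant a constant times `e^{-s} s^{a - ∑ b k - 1}`, gives the limit.
-/

section LaplaceIntegrals

lemma integrable_exp_neg_mul {α : Type*} [MeasurableSpace α] {μ : Measure α} {X g : α → ℝ}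
    (hg : Integrable g μ) (hXm : AEMeasurable X μ) (hX : 0 ≤ᵐ[μ] X) :
    Integrable (fun u => exp (-X u) * g u) μ := by
  refine hg.bdd_mul (c := 1) hXm.neg.exp.aestronglyMeasurable ?_
  filter_upwards [hX] with u hu
  rw [norm_of_nonneg (exp_pos _).le, exp_le_one_iff, neg_nonpos]
  exact hu

lemma integrableOn_exp_neg_mul_mul {f : ℝ → ℝ} {s : Set ℝ} {y : ℝ} (hf : IntegrableOn f s)
    (hs : MeasurableSet s) (hs0 : s ⊆ Set.Ici 0) (hy : 0 ≤ y) :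
    IntegrableOn (fun u => exp (-(y * u)) * f u) s :=
  integrable_exp_neg_mul hf (by fun_prop) <|
    ae_restrict_of_forall_mem hs fun _ hu => mul_nonneg hy (hs0 hu)

lemma rpow_mul_integral_exp_neg_mul_rpow {φ : ℝ → ℝ} {b y : ℝ} (hy : 0 < y) :
    y ^ b * ∫ u in Set.Ioi 0, exp (-(y * u)) * (u ^ (b - 1) * φ u) =
      ∫ w in Set.Ioi 0, exp (-w) * w ^ (b - 1) * φ (w / y) := by
  have hscale := integral_comp_mul_left_Ioi' (fun w => exp (-w) * w ^ (b - 1) * φ (w / y)) 0 hy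
  rw [mul_zero, smul_eq_mul] at hscale
  rw [← hscale, ← integral_const_mul, ← integral_const_mul]
  refine setIntegral_congr_fun measurableSet_Ioi fun u (hu : 0 < u) => ?_
  have hpow : y ^ b = y ^ (b - 1) * y := by rw [← rpow_add_one hy.ne', sub_add_cancel]
  simp only [mul_rpow hy.le hu.le, mul_div_cancel_left₀ u hy.ne', hpow]
  ring

lemma tendsto_rpow_mul_integral_exp_neg_mul_of_bounded {φ : ℝ → ℝ} {b C L : ℝ} (hb : 0 < b)
    (hφm : Measurable φ) (hφC : ∀ u, 0 < u → |φ u| ≤ C) (hφL : Tendsto φ (𝓝[>] 0) (𝓝 L)) :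
    Tendsto (fun y => y ^ b * ∫ u in Set.Ioi 0, exp (-(y * u)) * (u ^ (b - 1) * φ u))
      atTop (𝓝 (Gamma b * L)) := by
  refine Tendsto.congr' (f₁ := fun y => ∫ w in Set.Ioi 0, exp (-w) * w ^ (b - 1) * φ (w / y))
    ((eventually_gt_atTop 0).mono fun y hy => (rpow_mul_integral_exp_neg_mul_rpow hy).symm) ?_
  rw [Gamma_eq_integral hb, ← integral_mul_const]
  refine tendsto_integral_filter_of_dominated_convergence
    (fun w => exp (-w) * w ^ (b - 1) * C)
    (.of_forall fun y => Measurable.aestronglyMeasurable (by fun_prop)) ?_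
    ((GammaIntegral_convergent hb).mul_const C) ?_
  · filter_upwards [eventually_gt_atTop 0] with y hy
    refine ae_restrict_of_forall_mem measurableSet_Ioi fun w (hw : 0 < w) => ?_
    rw [norm_mul, norm_of_nonneg (by positivity)]
    exact mul_le_mul_of_nonneg_left (hφC _ (div_pos hw hy)) (by positivity)
  · refine ae_restrict_of_forall_mem measurableSet_Ioi fun w (hw : 0 < w) => ?_
    refine (hφL.comp (tendsto_nhdsWithin_iff.2 ⟨?_, ?_⟩)).const_mul _
    · exact tendsto_const_nhds.div_atTop tendsto_id
    · filter_upwards [eventually_gt_atTop 0] with y hy using div_pos hw hy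

lemma tendsto_rpow_mul_integral_Ioi_exp_neg_mul_zero {f : ℝ → ℝ} {δ : ℝ} (b : ℝ) (hδ : 0 < δ)
    (hf : IntegrableOn f (Set.Ioi δ)) :
    Tendsto (fun y => y ^ b * ∫ u in Set.Ioi δ, exp (-(y * u)) * f u) atTop (𝓝 0) := by
  have hdecay : Tendsto (fun y => y ^ b * exp (-δ * y) * ∫ u in Set.Ioi δ, |f u|) atTop (𝓝 0) := by
    simpa only [zero_mul] using
      (tendsto_rpow_mul_exp_neg_mul_atTop_nhds_zero b δ hδ).mul_const (∫ u in Set.Ioi δ, |f u|)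
  refine squeeze_zero_norm' ?_ hdecay
  filter_upwards [eventually_ge_atTop 0] with y hy
  rw [norm_mul, norm_of_nonneg (rpow_nonneg hy b), mul_assoc, ← integral_const_mul]
  refine mul_le_mul_of_nonneg_left ?_ (rpow_nonneg hy b)
  refine norm_integral_le_of_norm_le (hf.abs.const_mul _) ?_
  refine ae_restrict_of_forall_mem measurableSet_Ioi fun u (hu : δ < u) => ?_
  rw [norm_mul, norm_of_nonneg (exp_pos _).le, norm_eq_abs]
  gcongr
  nlinarith

/-- Watson's lemma to leading order: boundedness of `φ` near `0` is enough, because the part of the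
integral beyond any `δ > 0` is `O(e^{-δ y})`. -/
theorem tendsto_rpow_mul_integral_exp_neg_mul {φ : ℝ → ℝ} {b L : ℝ} (hb : 0 < b)
    (hφm : Measurable φ) (hφi : IntegrableOn (fun u => u ^ (b - 1) * φ u) (Set.Ioi 0))
    (hφL : Tendsto φ (𝓝[>] 0) (𝓝 L)) :
    Tendsto (fun y => y ^ b * ∫ u in Set.Ioi 0, exp (-(y * u)) * (u ^ (b - 1) * φ u))
      atTop (𝓝 (Gamma b * L)) := by
  obtain ⟨δ, hδ : 0 < δ, hφδ⟩ : ∃ δ ∈ Set.Ioi (0 : ℝ), Set.Ioc 0 δ ⊆ {u | |φ u| ≤ |L| + 1} :=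
    mem_nhdsGT_iff_exists_Ioc_subset.1 (hφL.abs.eventually_le_const (lt_add_one |L|))
  have hbound (u : ℝ) (hu : 0 < u) : |(Set.Iic δ).indicator φ u| ≤ |L| + 1 := by
    by_cases huδ : u ≤ δ
    · rw [Set.indicator_of_mem (Set.mem_Iic.2 huδ)]
      exact hφδ ⟨hu, huδ⟩
    · rw [Set.indicator_of_notMem (Set.mem_Iic.not.2 huδ), abs_zero]
      positivity
  have hlim : Tendsto ((Set.Iic δ).indicator φ) (𝓝[>] 0) (𝓝 L) := by
    refine hφL.congr' ?_
    filter_upwards [Ioc_mem_nhdsGT hδ] with u hu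
    rw [Set.indicator_of_mem (Set.mem_Iic.2 hu.2)]
  have hnear := tendsto_rpow_mul_integral_exp_neg_mul_of_bounded hb
    (hφm.indicator measurableSet_Iic) hbound hlim
  have hfar := tendsto_rpow_mul_integral_Ioi_exp_neg_mul_zero b hδ
    (hφi.mono_set (Set.Ioi_subset_Ioi hδ.le))
  rw [← add_zero (Gamma b * L)]
  refine (hnear.add hfar).congr' ?_
  filter_upwards [eventually_ge_atTop 0] with y hy
  have hi := integrableOn_exp_neg_mul_mul hφi measurableSet_Ioi Set.Ioi_subset_Ici_self hy
  have hsplit : ∫ u in Set.Ioi 0, exp (-(y * u)) * (u ^ (b - 1) * φ u) =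
      (∫ u in Set.Ioc 0 δ, exp (-(y * u)) * (u ^ (b - 1) * φ u)) +
        ∫ u in Set.Ioi δ, exp (-(y * u)) * (u ^ (b - 1) * φ u) := by
    rw [← setIntegral_union Set.Ioc_disjoint_Ioi_same measurableSet_Ioi
      (hi.mono_set Set.Ioc_subset_Ioi_self) (hi.mono_set (Set.Ioi_subset_Ioi hδ.le)),
      Set.Ioc_union_Ioi_eq_Ioi hδ.le]
  rw [hsplit, mul_add, ← Set.Ioi_inter_Iic, ← setIntegral_indicator measurableSet_Iic]
  simp only [Set.indicator_mul_right]

theorem integral_mul_one_add_rpow_neg {α : Type*} [MeasurableSpace α] {μ : Measure α} [SFinite μ]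
    {a : ℝ} {X g : α → ℝ} (ha : 0 < a) (hg : Integrable g μ) (hXm : AEMeasurable X μ)
    (hX : 0 ≤ᵐ[μ] X) :
    ∫ u, g u * (1 + X u) ^ (-a) ∂μ =
      (Gamma a)⁻¹ * ∫ s in Set.Ioi 0, s ^ (a - 1) * exp (-s) * ∫ u, exp (-(s * X u)) * g u ∂μ := by
  let γ : ℝ → ℝ := fun s => s ^ (a - 1) * exp (-s)
  have hγ : IntegrableOn γ (Set.Ioi 0) := by
    simpa only [γ, mul_comm] using GammaIntegral_convergent ha
  have hGamma : ∀ᵐ u ∂μ, g u * (1 + X u) ^ (-a) =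
      (Gamma a)⁻¹ * ∫ s in Set.Ioi 0, exp (-(s * X u)) * (g u * γ s) := by
    filter_upwards [hX] with u (hu : 0 ≤ X u)
    have hr : 0 < 1 + X u := by linarith
    have hexp : ∫ s in Set.Ioi 0, exp (-(s * X u)) * (g u * γ s) =
        g u * ∫ s in Set.Ioi 0, s ^ (a - 1) * exp (-((1 + X u) * s)) := by
      rw [← integral_const_mul]
      congr 1 with s
      rw [show -((1 + X u) * s) = -s + -(s * X u) by ring, exp_add]
      ring
    rw [hexp, integral_rpow_mul_exp_neg_mul_Ioi ha hr, one_div, inv_rpow hr.le, ← rpow_neg hr.le]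
    field_simp [(Gamma_pos_of_pos ha).ne']
  have hprod : Integrable (fun p : α × ℝ => exp (-(p.2 * X p.1)) * (g p.1 * γ p.2))
      (μ.prod (volume.restrict (Set.Ioi 0))) := by
    refine integrable_exp_neg_mul (hg.mul_prod hγ)
      (measurable_snd.aemeasurable.mul hXm.comp_fst) ?_
    filter_upwards [Measure.quasiMeasurePreserving_fst.ae hX,
      Measure.quasiMeasurePreserving_snd.ae (ae_restrict_mem measurableSet_Ioi)] with p hp hs
    exact mul_nonneg (le_of_lt hs) hp
  rw [integral_congr_ae hGamma, integral_const_mul, integral_integral_swap hprod]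
  congr 1
  refine setIntegral_congr_fun measurableSet_Ioi fun s _ => ?_
  simp only [← integral_const_mul]
  congr 1 with u
  ring

end LaplaceIntegrals

section BetaLaplace

/-- The Laplace transform of the Beta weight `u ^ (b - 1) * (1 - u) ^ (d - 1)` on `[0, 1]`, that is,
`Γ(b) Γ(d) / Γ(b + d)` times Kummer's function `₁F₁(b; b + d; -y)`. In the Laplace representation
of `lauricellaFA a b c`, the `k`-th variable contributes a factor with `b = b k` and
`d = c k - b k`. -/
noncomputable def betaLaplace (b d y : ℝ) : ℝ :=
  ∫ u in Set.Icc (0 : ℝ) 1, exp (-(y * u)) * (u ^ (b - 1) * (1 - u) ^ (d - 1))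

variable {b d : ℝ}

lemma integrableOn_rpow_mul_one_sub_rpow (hb : 0 < b) (hd : 0 < d) :
    IntegrableOn (fun u : ℝ => u ^ (b - 1) * (1 - u) ^ (d - 1)) (Set.Icc 0 1) := by
  have hconv := Complex.betaIntegral_convergent (u := (b : ℂ)) (v := (d : ℂ)) (by simpa) (by simpa)
  rw [intervalIntegrable_iff_integrableOn_Icc_of_le zero_le_one] at hconv
  refine IntegrableOn.congr_fun hconv.re (fun u hu => ?_) measurableSet_Icc
  have hu' : 0 ≤ 1 - u := sub_nonneg.2 hu.2
  have hcast : (u : ℂ) ^ ((b : ℂ) - 1) * (1 - (u : ℂ)) ^ ((d : ℂ) - 1) =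
      ((u ^ (b - 1) * (1 - u) ^ (d - 1) : ℝ) : ℂ) := by
    push_cast [Complex.ofReal_cpow hu.1, Complex.ofReal_cpow hu']
    rfl
  rw [hcast]
  exact RCLike.ofReal_re _

lemma rpow_mul_one_sub_rpow_nonneg {u : ℝ} (hu : u ∈ Set.Icc (0 : ℝ) 1) :
    0 ≤ u ^ (b - 1) * (1 - u) ^ (d - 1) :=
  mul_nonneg (rpow_nonneg hu.1 _) (rpow_nonneg (sub_nonneg.2 hu.2) _)

lemma betaLaplace_nonneg (b d y : ℝ) : 0 ≤ betaLaplace b d y :=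
  setIntegral_nonneg measurableSet_Icc fun _ hu =>
    mul_nonneg (exp_pos _).le (rpow_mul_one_sub_rpow_nonneg hu)

lemma measurable_betaLaplace (b d : ℝ) : Measurable (betaLaplace b d) := by
  have hm : StronglyMeasurable (Function.uncurry fun y u : ℝ =>
      exp (-(y * u)) * (u ^ (b - 1) * (1 - u) ^ (d - 1))) :=
    Measurable.stronglyMeasurable (by unfold Function.uncurry; fun_prop)
  exact (hm.integral_prod_right (ν := volume.restrict (Set.Icc (0 : ℝ) 1))).measurable

lemma antitoneOn_betaLaplace (hb : 0 < b) (hd : 0 < d) :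
    AntitoneOn (betaLaplace b d) (Set.Ici 0) := by
  intro x hx y hy hxy
  have hi := integrableOn_rpow_mul_one_sub_rpow hb hd
  refine setIntegral_mono_on
    (integrableOn_exp_neg_mul_mul hi measurableSet_Icc Set.Icc_subset_Ici_self hy)
    (integrableOn_exp_neg_mul_mul hi measurableSet_Icc Set.Icc_subset_Ici_self hx)
    measurableSet_Icc fun u hu => ?_
  have := rpow_mul_one_sub_rpow_nonneg (b := b) (d := d) hu
  have := hu.1
  gcongr

theorem tendsto_rpow_mul_betaLaplace (hb : 0 < b) (hd : 0 < d) :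
    Tendsto (fun y => y ^ b * betaLaplace b d y) atTop (𝓝 (Gamma b)) := by
  let φ : ℝ → ℝ := (Set.Iic 1).indicator fun u => (1 - u) ^ (d - 1)
  have hφi : IntegrableOn (fun u => u ^ (b - 1) * φ u) (Set.Ioi 0) := by
    have hφ : (fun u => u ^ (b - 1) * φ u) =
        (Set.Iic 1).indicator fun u => u ^ (b - 1) * (1 - u) ^ (d - 1) := by
      ext u
      simp only [φ, Set.indicator_mul_right]
    rw [hφ, integrableOn_indicator_iff measurableSet_Iic, Set.inter_comm, Set.Ioi_inter_Iic]
    exact (integrableOn_rpow_mul_one_sub_rpow hb hd).mono_set Set.Ioc_subset_Icc_self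
  have hφL : Tendsto φ (𝓝[>] 0) (𝓝 1) := by
    have hcont : ContinuousAt (fun u : ℝ => (1 - u) ^ (d - 1)) 0 :=
      (continuousAt_const.sub continuousAt_id).rpow_const (.inl (by norm_num))
    have hlim := hcont.tendsto.mono_left (nhdsWithin_le_nhds (s := Set.Ioi 0))
    rw [sub_zero, one_rpow] at hlim
    refine hlim.congr' ?_
    filter_upwards [Ioc_mem_nhdsGT one_pos] with u hu
    simp only [φ, Set.indicator_of_mem (Set.mem_Iic.2 hu.2)]
  have hlim := tendsto_rpow_mul_integral_exp_neg_mul hb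
    (Measurable.indicator (by fun_prop) measurableSet_Iic) hφi hφL
  rw [mul_one] at hlim
  refine hlim.congr fun y => ?_
  rw [betaLaplace, integral_Icc_eq_integral_Ioc, ← Set.Ioi_inter_Iic,
    ← setIntegral_indicator measurableSet_Iic]
  simp only [Set.indicator_mul_right]

lemma exists_rpow_mul_betaLaplace_le (hb : 0 < b) (hd : 0 < d) :
    ∃ C, ∀ y, 0 ≤ y → y ^ b * betaLaplace b d y ≤ C := by
  obtain ⟨Y, hY⟩ := eventually_atTop.1 <|
    (tendsto_rpow_mul_betaLaplace hb hd).eventually_le_const (lt_add_one (Gamma b))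
  refine ⟨max (Gamma b + 1) (Y ^ b * betaLaplace b d 0), fun y hy => ?_⟩
  rcases le_total Y y with hYy | hyY
  · exact (hY y hYy).trans (le_max_left _ _)
  · refine le_max_of_le_right (mul_le_mul (rpow_le_rpow hy hyY hb.le) ?_
      (betaLaplace_nonneg b d y) (rpow_nonneg (hy.trans hyY) b))
    exact antitoneOn_betaLaplace hb hd Set.self_mem_Ici hy hy

end BetaLaplace

section Lauricella

variable {ι : Type*} [Fintype ι] {a : ℝ} {b c : ι → ℝ}

lemma prod_rpow_mul_exp_neg_mul_prod {w κ : ι → ℝ} {s : ℝ} (hw : ∀ k, 0 < w k) (hs : 0 < s) :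
    (∏ k, w k ^ b k) * (s ^ (a - 1) * exp (-s) * ∏ k, κ k) =
      exp (-s) * s ^ (a - ∑ k, b k - 1) * ∏ k, (s * w k) ^ b k * κ k := by
  have hsplit : s ^ (a - 1) = s ^ (a - ∑ k, b k - 1) * ∏ k, s ^ b k := by
    rw [← rpow_sum_of_pos hs, ← rpow_add hs]
    ring_nf
  simp only [hsplit, mul_rpow hs.le (hw _).le, Finset.prod_mul_distrib]
  ring

theorem tendsto_prod_rpow_mul_integral_prod {K : ι → ℝ → ℝ} {L : ι → ℝ} (ha : ∑ k, b k < a)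
    (hKm : ∀ k, Measurable (K k)) (hKC : ∀ k, ∃ C, ∀ y, 0 < y → |y ^ b k * K k y| ≤ C)
    (hKL : ∀ k, Tendsto (fun y => y ^ b k * K k y) atTop (𝓝 (L k))) :
    Tendsto (fun w : ι → ℝ => (∏ k, w k ^ b k) *
        ∫ s in Set.Ioi 0, s ^ (a - 1) * exp (-s) * ∏ k, K k (s * w k))
      (Filter.pi fun _ => atTop) (𝓝 (Gamma (a - ∑ k, b k) * ∏ k, L k)) := by
  choose C hC using hKC
  have ha' : 0 < a - ∑ k, b k := sub_pos.2 ha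
  have hpos : ∀ᶠ w : ι → ℝ in Filter.pi fun _ => atTop, ∀ k, 0 < w k :=
    eventually_pi fun _ => eventually_gt_atTop 0
  rw [Gamma_eq_integral ha', ← integral_mul_const]
  refine Tendsto.congr' (f₁ := fun w => ∫ s in Set.Ioi 0,
    exp (-s) * s ^ (a - ∑ k, b k - 1) * ∏ k, (s * w k) ^ b k * K k (s * w k)) ?_ ?_
  · filter_upwards [hpos] with w hw
    rw [← integral_const_mul]
    exact setIntegral_congr_fun measurableSet_Ioi fun s hs =>
      (prod_rpow_mul_exp_neg_mul_prod hw hs).symm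
  refine tendsto_integral_filter_of_dominated_convergence
    (fun s => exp (-s) * s ^ (a - ∑ k, b k - 1) * ∏ k, C k)
    (.of_forall fun w => Measurable.aestronglyMeasurable (by fun_prop)) ?_
    ((GammaIntegral_convergent ha').mul_const _) ?_
  · filter_upwards [hpos] with w hw
    refine ae_restrict_of_forall_mem measurableSet_Ioi fun s (hs : 0 < s) => ?_
    rw [norm_mul, norm_of_nonneg (by positivity), norm_prod]
    gcongr with k
    exact hC k _ (mul_pos hs (hw k))
  · refine ae_restrict_of_forall_mem measurableSet_Ioi fun s (hs : 0 < s) => ?_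
    refine (tendsto_finsetProd _ fun k _ => (hKL k).comp ?_).const_mul _
    exact (tendsto_eval_pi (fun _ => atTop) k).const_mul_atTop hs

theorem lauricellaFA_neg_eq_integral_betaLaplace {w : ι → ℝ} (ha : 0 < a) (hb : ∀ k, 0 < b k)
    (hbc : ∀ k, b k < c k) (hw : ∀ k, 0 ≤ w k) :
    lauricellaFA a b c (-w) = (∏ k, Gamma (c k) / (Gamma (b k) * Gamma (c k - b k))) *
      ((Gamma a)⁻¹ * ∫ s in Set.Ioi 0, s ^ (a - 1) * exp (-s) *
        ∏ k, betaLaplace (b k) (c k - b k) (s * w k)) := by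
  have hcube : (volume : Measure (ι → ℝ)).restrict (Set.univ.pi fun _ => Set.Icc 0 1) =
      Measure.pi fun _ => volume.restrict (Set.Icc 0 1) := by
    rw [volume_pi, Measure.restrict_pi_pi]
  have hweight : Integrable (fun u : ι → ℝ => ∏ k, u k ^ (b k - 1) * (1 - u k) ^ (c k - b k - 1))
      (volume.restrict (Set.univ.pi fun _ => Set.Icc 0 1)) := by
    rw [hcube]
    exact Integrable.fintype_prod
      (f := fun k (u : ℝ) => u ^ (b k - 1) * (1 - u) ^ (c k - b k - 1))
      fun k => integrableOn_rpow_mul_one_sub_rpow (hb k) (sub_pos.2 (hbc k))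
  have hfactor (s : ℝ) :
      ∫ u in Set.univ.pi fun _ : ι => Set.Icc (0 : ℝ) 1, exp (-(s * ∑ k, w k * u k)) *
        ∏ k, u k ^ (b k - 1) * (1 - u k) ^ (c k - b k - 1) =
      ∏ k, betaLaplace (b k) (c k - b k) (s * w k) := by
    simp only [betaLaplace]
    rw [hcube, ← integral_fintype_prod_eq_prod]
    simp only [Finset.prod_mul_distrib, ← exp_sum, Finset.mul_sum, Finset.sum_neg_distrib,
      mul_assoc]
  have hlaplace := integral_mul_one_add_rpow_neg (X := fun u => ∑ k, w k * u k) ha hweight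
    (Measurable.aemeasurable (by fun_prop)) <| ae_restrict_of_forall_mem
      (MeasurableSet.univ_pi fun _ => measurableSet_Icc) fun u hu =>
        Finset.sum_nonneg fun k _ => mul_nonneg (hw k) (hu k trivial).1
  simp only [hfactor] at hlaplace
  simp only [lauricellaFA, Pi.neg_apply, neg_mul, Finset.sum_neg_distrib, sub_neg_eq_add, hlaplace]

theorem tendsto_prod_rpow_mul_lauricellaFA_neg (hb : ∀ k, 0 < b k) (hbc : ∀ k, b k < c k)
    (ha : ∑ k, b k < a) :
    Tendsto (fun w : ι → ℝ => (∏ k, w k ^ b k) * lauricellaFA a b c (-w))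
      (Filter.pi fun _ => atTop)
      (𝓝 (Gamma (a - ∑ k, b k) / Gamma a * ∏ k, Gamma (c k) / Gamma (c k - b k))) := by
  have hd (k : ι) : 0 < c k - b k := sub_pos.2 (hbc k)
  have ha0 : 0 < a := (Finset.sum_nonneg fun k _ => (hb k).le).trans_lt ha
  have hbound (k : ι) : ∃ C, ∀ y, 0 < y → |y ^ b k * betaLaplace (b k) (c k - b k) y| ≤ C := by
    obtain ⟨C, hC⟩ := exists_rpow_mul_betaLaplace_le (hb k) (hd k)
    refine ⟨C, fun y hy => ?_⟩
    rw [abs_of_nonneg (mul_nonneg (rpow_nonneg hy.le _) (betaLaplace_nonneg _ _ _))]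
    exact hC y hy.le
  have hlim := (tendsto_prod_rpow_mul_integral_prod ha
    (fun k => measurable_betaLaplace (b k) (c k - b k)) hbound
    fun k => tendsto_rpow_mul_betaLaplace (hb k) (hd k)).const_mul
      ((∏ k, Gamma (c k) / (Gamma (b k) * Gamma (c k - b k))) * (Gamma a)⁻¹)
  have hconst : ∏ k, Gamma (c k) / Gamma (c k - b k) =
      (∏ k, Gamma (c k) / (Gamma (b k) * Gamma (c k - b k))) * ∏ k, Gamma (b k) := by
    rw [← Finset.prod_mul_distrib]
    refine Finset.prod_congr rfl fun k _ => ?_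
    field_simp [(Gamma_pos_of_pos (hb k)).ne']
  convert hlim.congr' ?_ using 2
  · rw [hconst]
    ring
  · filter_upwards [eventually_pi fun _ : ι => eventually_ge_atTop (0 : ℝ)] with w hw
    rw [lauricellaFA_neg_eq_integral_betaLaplace ha0 hb hbc hw]
    ring

lemma rpow_neg_sum_eq_prod_rpow_neg_mul_prod_rpow {w : ι → ℝ} {t : ℝ} (ht : 0 < t)
    (hw : ∀ k, 0 < w k) :
    t ^ (-∑ k, b k) = (∏ k, (t * w k) ^ (-b k)) * ∏ k, w k ^ b k := by
  rw [← Finset.sum_neg_distrib, rpow_sum_of_pos ht, ← Finset.prod_mul_distrib]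
  refine Finset.prod_congr rfl fun k _ => ?_
  rw [mul_rpow ht.le (hw k).le, mul_assoc, ← rpow_add (hw k), neg_add_cancel, rpow_zero, mul_one]

theorem lauricella_limit_relation_general {z : ι → ℝ → ℝ} {ζ : ι → ℝ} (hb : ∀ k, 0 < b k)
    (hbc : ∀ k, b k < c k) (ha : ∑ k, b k < a)
    (hz : ∀ k, Tendsto (z k) (𝓝[>] 0) (𝓝 (ζ k))) (hζ : ∀ k, 0 < ζ k) :
    Tendsto (fun t : ℝ => t ^ (-∑ k, b k) * lauricellaFA a b c fun k => 1 - z k t / t)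
      (𝓝[>] 0)
      (𝓝 (Gamma (a - ∑ k, b k) / Gamma a *
        ∏ k, Gamma (c k) / (ζ k ^ b k * Gamma (c k - b k)))) := by
  let w : ℝ → ι → ℝ := fun t k => z k t / t - 1
  have hw : Tendsto w (𝓝[>] 0) (Filter.pi fun _ => atTop) := tendsto_pi.2 fun k =>
    tendsto_atTop_add_const_right _ (-1) ((hz k).pos_mul_atTop (hζ k) tendsto_inv_nhdsGT_zero)
  have hpos : ∀ᶠ t : ℝ in 𝓝[>] 0, 0 < t := self_mem_nhdsWithin
  have htw (k : ι) : Tendsto (fun t => t * w t k) (𝓝[>] 0) (𝓝 (ζ k)) := by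
    have hsub := (hz k).sub (tendsto_id.mono_left nhdsWithin_le_nhds)
    rw [sub_zero] at hsub
    refine hsub.congr' ?_
    filter_upwards [hpos] with t ht
    simp only [w, id]
    field_simp
  have hpow := tendsto_finsetProd Finset.univ fun k _ =>
    (htw k).rpow_const (p := -b k) (.inl (hζ k).ne')
  have hlim := hpow.mul ((tendsto_prod_rpow_mul_lauricellaFA_neg hb hbc ha).comp hw)
  convert hlim.congr' ?_ using 2
  · rw [mul_left_comm, ← Finset.prod_mul_distrib]
    congr! 2 with k
    rw [rpow_neg (hζ k).le]
    field_simp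
  · have hwpos := hw.eventually (eventually_pi fun _ => eventually_gt_atTop 0)
    filter_upwards [hpos, hwpos] with t ht hwt
    have hneg : (fun k => 1 - z k t / t) = -w t := by
      ext k
      simp only [w, Pi.neg_apply, neg_sub]
    rw [rpow_neg_sum_eq_prod_rpow_neg_mul_prod_rpow ht hwt, hneg, mul_assoc, Function.comp_apply]

end Lauricella

/-- **Lemma 1 of the paper** (limiting relation): if `0 < b_k < c_k`, `a > Σ b_k`,
and `z_k` are positive functions continuous at `0` from the right with `z_k(0) > 0`, then
`lim_{ε→0⁺} ε^{−Σ b_k} F_A^{(n)}(a, b; c; 1 − z_1(ε)/ε, …, 1 − z_n(ε)/ε)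
  = Γ(a − Σ b_k)/Γ(a) ∏_k Γ(c_k)/(z_k(0)^{b_k} Γ(c_k − b_k))`. -/
theorem lauricella_limit_relation (n : ℕ) (hn : 1 ≤ n) (a : ℝ) (b c : Fin n → ℝ)
    (hbc : ∀ k, 0 < b k ∧ b k < c k) (ha : ∑ k, b k < a)
    (z : Fin n → ℝ → ℝ)
    (hzc : ∀ k, ContinuousWithinAt (z k) (Set.Ici 0) 0)
    (hz0 : ∀ k, 0 < z k 0)
    (hzpos : ∀ k, ∀ᶠ t in nhdsWithin 0 (Set.Ioi 0), 0 < z k t) :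
    Filter.Tendsto
      (fun t : ℝ => t ^ (-(∑ k, b k)) * lauricellaFA a b c (fun k => 1 - z k t / t))
      (nhdsWithin 0 (Set.Ioi 0))
      (nhds (Real.Gamma (a - ∑ k, b k) / Real.Gamma a *
        ∏ k, Real.Gamma (c k) / (z k 0 ^ b k * Real.Gamma (c k - b k)))) :=
  lauricella_limit_relation_general (fun k => (hbc k).1) (fun k => (hbc k).2) ha
    (fun k => (hzc k).mono Set.Ioi_subset_Ici_self) hz0
end
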